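/- Given two Borel probability measures μ, ν on ℝ, there exist a Borel probability measure λ on ℝ and analytic functions ω₁, ω₂ : ℂ⁺ → ℂ⁺ such that F_λ(z) = F_μ(ω₁(z)) = F_ν(ω₂(z)) and F_λ(z) + z = ω₁(z) + ω₂(z) for all z ∈ ℂ⁺, and lim_{y→+∞} ω_j(iy)/(iy) = 1 for j = 1,2. Moreover, the pair (ω₁, ω₂) of analytic self-maps of ℂ⁺ satisfying F_μ(ω₁(z)) = F_ν(ω₂(z)) = ω₁(z) + ω₂(z) − z for all z ∈ ℂ⁺ is unique. -/

import Mathlib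

open Complex Filter Set Topology MeasureTheory

/-- The open upper half-plane `ℂ⁺ = {z : ℂ | Im z > 0}`. -/
def UHP : Set ℂ := {z : ℂ | 0 < z.im}

/-- The Cauchy transform `G_μ(z) = ∫ dμ(t)/(z − t)` of a measure `μ` on `ℝ`. -/
noncomputable def cauchyT (μ : Measure ℝ) (z : ℂ) : ℂ :=
  ∫ t, (z - (t : ℂ))⁻¹ ∂μ

/-- The reciprocal Cauchy transform `F_μ = 1/G_μ`. -/
noncomputable def Fmeas (μ : Measure ℝ) (z : ℂ) : ℂ := (cauchyT μ z)⁻¹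

/-!
Put `H_μ(w) = F_μ(w) - w`, whose imaginary part is nonnegative on `ℂ⁺`. For fixed `z ∈ ℂ⁺` the
equations for `(ω₁(z), ω₂(z))` say that `ω₂ = z + H_μ(ω₁)` and `ω₁ = z + H_ν(ω₂)`, so `ω₁(z)` is a
fixed point of `f = (z + H_ν) ∘ (z + H_μ)`, which maps `ℂ⁺` into `{Im w ≥ Im z}`. Hence `f` is a
strict contraction in the Schwarz–Pick sense: it has at most one fixed point, and its derivative
there is not `1`, so that `ω₁` is analytic by the implicit function theorem.

A limit point of an orbit of `f` in `ℂ⁺` is a fixed point, because the hyperbolic displacement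
decreases along the orbit. An orbit without limit points would tend to `∞` (the closed half-plane
`{Im w ≥ Im z}` touches `∂ℂ⁺` only there); but `z + H_ν` and `z + H_μ` lower the imaginary part of
some point, and by Wolff's horocycle argument they then eventually increase `Im w / |w|²`, which
would have to tend to `0`.

Finally, `-1 / (F_μ ∘ ω₁)` is a self-map of `ℂ⁺` asymptotic to `-1 / z` at `i∞`, so its Nevanlinna
representation exhibits it as `-G_λ` for a probability measure `λ`.
-/

lemma mem_UHP {z : ℂ} : z ∈ UHP ↔ 0 < z.im := Iff.rfl

lemma isOpen_UHP : IsOpen UHP := isOpen_lt continuous_const continuous_im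

section Cayley

local notation "conj" => starRingEnd ℂ

/-- The Cayley transform of the upper half-plane onto the unit disc that sends `b` to `0`. -/
noncomputable def cayley (b z : ℂ) : ℂ := (z - b) / (z - conj b)

/-- The inverse of `cayley b`. -/
noncomputable def cayleyInv (b ζ : ℂ) : ℂ := (b - conj b * ζ) / (1 - ζ)

lemma norm_sub_conj_sq (z b : ℂ) : ‖z - conj b‖ ^ 2 = ‖z - b‖ ^ 2 + 4 * (z.im * b.im) := by
  simp only [Complex.sq_norm, normSq_apply, sub_re, sub_im, conj_re, conj_im]
  ring

variable {b z ζ : ℂ}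

lemma sub_conj_ne_zero (hb : b ∈ UHP) (hz : z ∈ UHP) : z - conj b ≠ 0 := by
  intro h
  have him : z.im + b.im = 0 := by simpa using congrArg im h
  linarith [mem_UHP.1 hb, mem_UHP.1 hz]

lemma norm_sub_conj_pos (hb : b ∈ UHP) (hz : z ∈ UHP) : 0 < ‖z - conj b‖ :=
  norm_pos_iff.2 (sub_conj_ne_zero hb hz)

lemma one_sub_norm_cayley_sq (hb : b ∈ UHP) (hz : z ∈ UHP) :
    1 - ‖cayley b z‖ ^ 2 = 4 * (z.im * b.im) / ‖z - conj b‖ ^ 2 := by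
  have h := (norm_sub_conj_pos hb hz).ne'
  rw [cayley, norm_div, div_pow]
  field_simp
  linear_combination norm_sub_conj_sq z b

lemma cayley_mem_ball (hb : b ∈ UHP) (hz : z ∈ UHP) : cayley b z ∈ Metric.ball (0 : ℂ) 1 := by
  have h : 0 < 1 - ‖cayley b z‖ ^ 2 := by
    have := norm_sub_conj_pos hb hz
    have := mul_pos (mem_UHP.1 hz) (mem_UHP.1 hb)
    rw [one_sub_norm_cayley_sq hb hz]
    positivity
  rw [mem_ball_zero_iff]
  exact (sq_lt_one_iff₀ (norm_nonneg _)).1 (by linarith)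

lemma one_sub_ne_zero_of_mem_ball (hζ : ζ ∈ Metric.ball (0 : ℂ) 1) : 1 - ζ ≠ 0 := by
  rintro h
  simp [← sub_eq_zero.1 h] at hζ

lemma im_cayleyInv (b ζ : ℂ) :
    (cayleyInv b ζ).im = b.im * (1 - ‖ζ‖ ^ 2) / ‖1 - ζ‖ ^ 2 := by
  simp only [cayleyInv, div_im, sub_re, sub_im, mul_re, mul_im, conj_re, conj_im, one_re, one_im,
    Complex.sq_norm, normSq_apply]
  ring

lemma cayleyInv_mem_UHP (hb : b ∈ UHP) (hζ : ζ ∈ Metric.ball (0 : ℂ) 1) :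
    cayleyInv b ζ ∈ UHP := by
  have hζ1 : 0 < ‖1 - ζ‖ := norm_pos_iff.2 (one_sub_ne_zero_of_mem_ball hζ)
  have hnorm : 0 < 1 - ‖ζ‖ ^ 2 :=
    sub_pos.2 ((sq_lt_one_iff₀ (norm_nonneg _)).2 (mem_ball_zero_iff.1 hζ))
  rw [mem_UHP, im_cayleyInv]
  exact div_pos (mul_pos hb hnorm) (pow_pos hζ1 2)

lemma one_sub_cayley (hz : z - conj b ≠ 0) : 1 - cayley b z = (b - conj b) / (z - conj b) := by
  rw [cayley]
  field_simp
  ring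

lemma cayleyInv_cayley (hb : b ∈ UHP) (hz : z ∈ UHP) : cayleyInv b (cayley b z) = z := by
  have h := sub_conj_ne_zero hb hz
  have h' : b - conj b ≠ 0 := sub_conj_ne_zero hb hb
  rw [cayleyInv, one_sub_cayley h, cayley]
  field_simp
  ring

lemma cayley_cayleyInv (hb : b ∈ UHP) (hζ : ζ ≠ 1) : cayley b (cayleyInv b ζ) = ζ := by
  have h : b - conj b ≠ 0 := sub_conj_ne_zero hb hb
  have hζ1 : 1 - ζ ≠ 0 := sub_ne_zero.2 hζ.symm
  have hnum : cayleyInv b ζ - b = (b - conj b) * ζ / (1 - ζ) := by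
    rw [cayleyInv]
    field_simp
    ring
  have hden : cayleyInv b ζ - conj b = (b - conj b) / (1 - ζ) := by
    rw [cayleyInv]
    field_simp
    ring
  rw [cayley, hnum, hden]
  field_simp

lemma cayleyInv_zero (b : ℂ) : cayleyInv b 0 = b := by simp [cayleyInv]

lemma cayley_sub_cayley {w : ℂ} (hw : w - conj b ≠ 0) (hz : z - conj b ≠ 0) :
    cayley b w - cayley b z = (b - conj b) * (w - z) / ((w - conj b) * (z - conj b)) := by
  rw [cayley, cayley]
  field_simp
  ring

lemma differentiableOn_cayley (hb : b ∈ UHP) : DifferentiableOn ℂ (cayley b) UHP := fun _ hz =>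
  ((differentiableAt_id.sub_const b).div (differentiableAt_id.sub_const _)
    (sub_conj_ne_zero hb hz)).differentiableWithinAt

lemma differentiableOn_cayleyInv (b : ℂ) :
    DifferentiableOn ℂ (cayleyInv b) (Metric.ball (0 : ℂ) 1) := fun _ hζ =>
  (((differentiableAt_const b).sub (differentiableAt_id.const_mul _)).div
    ((differentiableAt_const 1).sub differentiableAt_id)
    (one_sub_ne_zero_of_mem_ball hζ)).differentiableWithinAt

end Cayley

section SchwarzPick

variable {f : ℂ → ℂ} {c : ℝ} {z w : ℂ}

lemma norm_cayley_le_norm_cayley (hf : DifferentiableOn ℂ f UHP) (hm : MapsTo f UHP UHP)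
    (hw : w ∈ UHP) (hz : z ∈ UHP) : ‖cayley (f w) (f z)‖ ≤ ‖cayley w z‖ := by
  let g : ℂ → ℂ := cayley (f w) ∘ f ∘ cayleyInv w
  have hInv : MapsTo (cayleyInv w) (Metric.ball (0 : ℂ) 1) UHP := fun ζ => cayleyInv_mem_UHP hw
  have hg : DifferentiableOn ℂ g (Metric.ball (0 : ℂ) 1) :=
    (differentiableOn_cayley (hm hw)).comp (hf.comp (differentiableOn_cayleyInv w) hInv)
      (hm.comp hInv)
  have hgm : MapsTo g (Metric.ball (0 : ℂ) 1) (Metric.closedBall (0 : ℂ) 1) := fun ζ hζ =>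
    Metric.ball_subset_closedBall (cayley_mem_ball (hm hw) (hm (hInv hζ)))
  have hg0 : g 0 = 0 := by simp [g, cayleyInv_zero, cayley]
  simpa [g, cayleyInv_cayley hw hz] using
    Complex.norm_le_norm_of_mapsTo_ball hg hgm hg0 (mem_ball_zero_iff.1 (cayley_mem_ball hw hz))

theorem schwarzPick_UHP (hf : DifferentiableOn ℂ f UHP) (hm : MapsTo f UHP UHP)
    (hz : z ∈ UHP) (hw : w ∈ UHP) :
    ‖f z - f w‖ ^ 2 * (z.im * w.im) ≤ ‖z - w‖ ^ 2 * ((f z).im * (f w).im) := by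
  have h : 1 - ‖cayley w z‖ ^ 2 ≤ 1 - ‖cayley (f w) (f z)‖ ^ 2 := by
    have := norm_cayley_le_norm_cayley hf hm hw hz
    gcongr
  have hpos := norm_sub_conj_pos hw hz
  have hpos' := norm_sub_conj_pos (hm hw) (hm hz)
  rw [one_sub_norm_cayley_sq hw hz, one_sub_norm_cayley_sq (hm hw) (hm hz),
    div_le_div_iff₀ (by positivity) (by positivity), norm_sub_conj_sq, norm_sub_conj_sq] at h
  linarith

theorem schwarzPick_of_le_im (hf : DifferentiableOn ℂ f UHP) (hc : ∀ u ∈ UHP, c ≤ (f u).im)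
    (hz : z ∈ UHP) (hw : w ∈ UHP) :
    ‖f z - f w‖ ^ 2 * (z.im * w.im) ≤ ‖z - w‖ ^ 2 * (((f z).im - c) * ((f w).im - c)) := by
  have h (δ : ℝ) (hδ : 0 < δ) : ‖f z - f w‖ ^ 2 * (z.im * w.im) ≤
      ‖z - w‖ ^ 2 * (((f z).im - c + δ) * ((f w).im - c + δ)) := by
    have him (u : ℂ) : (f u + I * ((δ - c : ℝ) : ℂ)).im = (f u).im - c + δ := by
      simp only [add_im, I_mul_im, ofReal_re]
      ring
    have hm : MapsTo (fun u => f u + I * ((δ - c : ℝ) : ℂ)) UHP UHP := fun u hu => by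
      rw [mem_UHP, him]
      linarith [hc u hu]
    simpa only [him, add_sub_add_right_eq_sub] using
      schwarzPick_UHP (hf.add_const _) hm hz hw
  have hlim : Tendsto (fun δ : ℝ => ‖z - w‖ ^ 2 * (((f z).im - c + δ) * ((f w).im - c + δ)))
      (𝓝[>] 0) (𝓝 (‖z - w‖ ^ 2 * (((f z).im - c) * ((f w).im - c)))) := by
    refine (Continuous.tendsto' (by fun_prop) _ _ (by simp)).mono_left nhdsWithin_le_nhds
  exact ge_of_tendsto hlim (eventually_mem_nhdsWithin.mono h)

theorem schwarzPick_strict (hf : DifferentiableOn ℂ f UHP) (hc0 : 0 < c)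
    (hc : ∀ u ∈ UHP, c ≤ (f u).im) (hz : z ∈ UHP) (hw : w ∈ UHP) (hzw : z ≠ w) :
    ‖f z - f w‖ ^ 2 * (z.im * w.im) < ‖z - w‖ ^ 2 * ((f z).im * (f w).im) := by
  have hpos : 0 < ‖z - w‖ := norm_pos_iff.2 (sub_ne_zero.2 hzw)
  refine (schwarzPick_of_le_im hf hc hz hw).trans_lt ?_
  have := hc z hz
  have := hc w hw
  gcongr <;> linarith

theorem norm_deriv_mul_im_le (hf : DifferentiableOn ℂ f UHP) (hc : ∀ u ∈ UHP, c ≤ (f u).im)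
    (hw : w ∈ UHP) : ‖deriv f w‖ * w.im ≤ (f w).im - c := by
  have hd : HasDerivAt f (deriv f w) w :=
    (hf.differentiableAt (isOpen_UHP.mem_nhds hw)).hasDerivAt
  have him : Tendsto im (𝓝[≠] w) (𝓝 w.im) :=
    (continuous_im.tendsto w).mono_left nhdsWithin_le_nhds
  have hfim : Tendsto (fun z => (f z).im) (𝓝[≠] w) (𝓝 (f w).im) :=
    (continuous_im.tendsto _).comp (hd.continuousAt.mono_left nhdsWithin_le_nhds)
  have hle : ∀ᶠ z in 𝓝[≠] w,
      ‖slope f w z‖ ^ 2 * (z.im * w.im) ≤ ((f z).im - c) * ((f w).im - c) := by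
    filter_upwards [self_mem_nhdsWithin, nhdsWithin_le_nhds (isOpen_UHP.mem_nhds hw)] with z hne hz
    have hpos : 0 < ‖z - w‖ := norm_pos_iff.2 (sub_ne_zero.2 hne)
    rw [slope_def_field, norm_div, div_pow, div_mul_eq_mul_div, div_le_iff₀' (by positivity)]
    exact schwarzPick_of_le_im hf hc hz hw
  have hsq : ‖deriv f w‖ ^ 2 * (w.im * w.im) ≤ ((f w).im - c) * ((f w).im - c) :=
    le_of_tendsto_of_tendsto
      (((hasDerivAt_iff_tendsto_slope.1 hd).norm.pow 2).mul (him.mul_const _))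
      ((hfim.sub_const c).mul_const _) hle
  exact (abs_le_of_sq_le_sq' (by linarith) (by linarith [hc w hw])).2

end SchwarzPick

section FixedPoints

open Function (IsFixedPt)

variable {f : ℂ → ℂ} {c : ℝ} {z w : ℂ}

theorem eq_of_isFixedPt (hf : DifferentiableOn ℂ f UHP) (hc0 : 0 < c)
    (hc : ∀ u ∈ UHP, c ≤ (f u).im) (hz : z ∈ UHP) (hw : w ∈ UHP) (hfz : IsFixedPt f z)
    (hfw : IsFixedPt f w) : z = w := by
  by_contra h
  have hlt := schwarzPick_strict hf hc0 hc hz hw h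
  rw [hfz.eq, hfw.eq] at hlt
  exact hlt.false

theorem deriv_ne_one_of_isFixedPt (hf : DifferentiableOn ℂ f UHP) (hc0 : 0 < c)
    (hc : ∀ u ∈ UHP, c ≤ (f u).im) (hw : w ∈ UHP) (hfw : IsFixedPt f w) : deriv f w ≠ 1 := by
  intro h
  have hle := norm_deriv_mul_im_le hf hc hw
  rw [h, hfw.eq, norm_one] at hle
  linarith

theorem norm_fixedPt_sub_le (hf : DifferentiableOn ℂ f UHP) (hz : z ∈ UHP)
    (hc : ∀ u ∈ UHP, z.im ≤ (f u).im) (hw : w ∈ UHP) (hfw : IsFixedPt f w)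
    (hd : 4 * ‖f z - z‖ ≤ z.im) : ‖w - z‖ ≤ 2 * ‖f z - z‖ := by
  have hz0 : 0 < z.im := hz
  have hw0 : 0 < w.im := hw
  have hfz : (f z).im - z.im ≤ z.im / 4 := by
    rw [← sub_im]
    linarith [im_le_norm (f z - z)]
  have hsp : ‖w - f z‖ ^ 2 * (w.im * z.im) ≤ (‖w - z‖ / 2) ^ 2 * (w.im * z.im) := calc
    ‖w - f z‖ ^ 2 * (w.im * z.im)
      ≤ ‖w - z‖ ^ 2 * ((w.im - z.im) * ((f z).im - z.im)) := by
        simpa only [hfw.eq] using schwarzPick_of_le_im hf hc hw hz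
    _ ≤ ‖w - z‖ ^ 2 * (w.im * (z.im / 4)) := by
        have := hc z hz
        gcongr
        linarith
    _ = (‖w - z‖ / 2) ^ 2 * (w.im * z.im) := by ring
  have hhalf : ‖w - f z‖ ≤ ‖w - z‖ / 2 :=
    le_of_sq_le_sq (le_of_mul_le_mul_right hsp (mul_pos hw0 hz0)) (by positivity)
  linarith [norm_sub_le_norm_sub_add_norm_sub w (f z) z]

/-- The displacement of `f` at `w` for the hyperbolic distance `d` of the upper half-plane,
encoded as `4 * sinh (d (f w) w / 2) ^ 2`. -/
noncomputable def displacement (f : ℂ → ℂ) (w : ℂ) : ℝ := ‖f w - w‖ ^ 2 / ((f w).im * w.im)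

lemma displacement_nonneg (hm : MapsTo f UHP UHP) (hw : w ∈ UHP) : 0 ≤ displacement f w := by
  have := mul_pos (mem_UHP.1 (hm hw)) (mem_UHP.1 hw)
  unfold displacement
  positivity

lemma continuousOn_displacement (hf : ContinuousOn f UHP) (hm : MapsTo f UHP UHP) :
    ContinuousOn (displacement f) UHP :=
  ((hf.sub continuousOn_id).norm.pow 2).div
    ((continuous_im.comp_continuousOn hf).mul continuous_im.continuousOn)
    fun _ hw => (mul_pos (hm hw) hw).ne'

lemma displacement_apply_lt (hf : DifferentiableOn ℂ f UHP) (hc0 : 0 < c)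
    (hc : ∀ u ∈ UHP, c ≤ (f u).im) (hw : w ∈ UHP) (hfw : ¬ IsFixedPt f w) :
    displacement f (f w) < displacement f w := by
  have hm : MapsTo f UHP UHP := fun u hu => hc0.trans_le (hc u hu)
  rw [displacement, displacement, div_lt_div_iff₀ (mul_pos (hm (hm hw)) (hm hw))
    (mul_pos (hm hw) hw)]
  exact schwarzPick_strict hf hc0 hc (hm hw) hw hfw

lemma displacement_apply_le (hf : DifferentiableOn ℂ f UHP) (hc0 : 0 < c)
    (hc : ∀ u ∈ UHP, c ≤ (f u).im) (hw : w ∈ UHP) : displacement f (f w) ≤ displacement f w := by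
  by_cases h : IsFixedPt f w
  · rw [h.eq]
  · exact (displacement_apply_lt hf hc0 hc hw h).le

lemma exists_tendsto_displacement_iterate (hf : DifferentiableOn ℂ f UHP) (hc0 : 0 < c)
    (hc : ∀ u ∈ UHP, c ≤ (f u).im) (hw : w ∈ UHP) :
    ∃ L, Tendsto (fun n => displacement f (f^[n] w)) atTop (𝓝 L) := by
  have hm : MapsTo f UHP UHP := fun u hu => hc0.trans_le (hc u hu)
  have hanti : Antitone fun n => displacement f (f^[n] w) := antitone_nat_of_succ_le fun n => by
    rw [Function.iterate_succ_apply']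
    exact displacement_apply_le hf hc0 hc (hm.iterate n hw)
  exact ⟨_, tendsto_atTop_ciInf hanti
    ⟨0, forall_mem_range.2 fun n => displacement_nonneg hm (hm.iterate n hw)⟩⟩

theorem isFixedPt_of_tendsto_subseq_iterate (hf : DifferentiableOn ℂ f UHP) (hc0 : 0 < c)
    (hc : ∀ u ∈ UHP, c ≤ (f u).im) (hw : w ∈ UHP) {a : ℂ} (ha : a ∈ UHP) {φ : ℕ → ℕ}
    (hφ : Tendsto φ atTop atTop) (hlim : Tendsto (fun k => f^[φ k] w) atTop (𝓝 a)) :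
    IsFixedPt f a := by
  have hm : MapsTo f UHP UHP := fun u hu => hc0.trans_le (hc u hu)
  have hcont : ContinuousAt f a := hf.continuousOn.continuousAt (isOpen_UHP.mem_nhds ha)
  have hcontD (u : ℂ) (hu : u ∈ UHP) : Tendsto (displacement f) (𝓝 u) (𝓝 (displacement f u)) :=
    (continuousOn_displacement hf.continuousOn hm).continuousAt (isOpen_UHP.mem_nhds hu)
  obtain ⟨L, hL⟩ := exists_tendsto_displacement_iterate hf hc0 hc hw
  have hDa : displacement f a = L :=
    tendsto_nhds_unique ((hcontD a ha).comp hlim) (hL.comp hφ)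
  have hDfa : displacement f (f a) = L := by
    refine tendsto_nhds_unique ((hcontD _ (hm ha)).comp (hcont.tendsto.comp hlim))
      ((hL.comp ((tendsto_add_atTop_nat 1).comp hφ)).congr fun k => ?_)
    simp only [Function.comp_apply, Function.iterate_succ_apply']
  by_contra hne
  exact (displacement_apply_lt hf hc0 hc ha hne).ne (hDfa.trans hDa.symm)

lemma isCompact_closedBall_inter_le_im (R c : ℝ) :
    IsCompact (Metric.closedBall (0 : ℂ) R ∩ {z | c ≤ z.im}) :=
  (isCompact_closedBall 0 R).inter_right (isClosed_le continuous_const continuous_im)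

theorem exists_isFixedPt_of_frequently_norm_iterate_le (hf : DifferentiableOn ℂ f UHP)
    (hc0 : 0 < c) (hc : ∀ u ∈ UHP, c ≤ (f u).im) (hw : w ∈ UHP) {R : ℝ}
    (hR : ∃ᶠ n in atTop, ‖f^[n] w‖ ≤ R) : ∃ a ∈ UHP, IsFixedPt f a := by
  have hm : MapsTo f UHP UHP := fun u hu => hc0.trans_le (hc u hu)
  have hfreq : ∃ᶠ n in atTop, f^[n] w ∈ Metric.closedBall 0 R ∩ {z | c ≤ z.im} := by
    refine (hR.and_eventually (eventually_ge_atTop 1)).mono fun n hn => ?_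
    obtain ⟨k, rfl⟩ := Nat.exists_eq_add_of_le' hn.2
    refine ⟨mem_closedBall_zero_iff.2 hn.1, ?_⟩
    rw [Function.iterate_succ_apply']
    exact hc _ (hm.iterate k hw)
  obtain ⟨a, ⟨-, hac⟩, φ, hφ, hlim⟩ :=
    (isCompact_closedBall_inter_le_im R c).tendsto_subseq' hfreq
  have ha : a ∈ UHP := hc0.trans_le hac
  exact ⟨a, ha, isFixedPt_of_tendsto_subseq_iterate hf hc0 hc hw ha hφ.tendsto_atTop hlim⟩

end FixedPoints

section Horocycles

variable {ι : Type*} {l : Filter ι} {f : ℂ → ℂ} {x : ι → ℂ}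

lemma tendsto_norm_sub_div_norm (hx : Tendsto x l (Bornology.cobounded ℂ)) (p : ℂ) :
    Tendsto (fun i => ‖x i - p‖ / ‖x i‖) l (𝓝 1) := by
  have hlim : Tendsto (fun i => ‖1 - p * (x i)⁻¹‖) l (𝓝 1) := by
    simpa using (((tendsto_inv₀_cobounded.comp hx).const_mul p).const_sub 1).norm
  refine hlim.congr' ?_
  filter_upwards [hx.eventually_ne_cobounded 0] with i hi
  rw [← norm_div, sub_div, div_self hi, div_eq_mul_inv]

/-- Wolff's argument: the horocycles at `∞` are the level sets of `im z / ‖z‖ ^ 2` near `∞`. -/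
theorem eventually_im_div_norm_sq_lt (hf : DifferentiableOn ℂ f UHP) (hm : MapsTo f UHP UHP)
    {u : ℂ} (hu : u ∈ UHP) (hfu : (f u).im < u.im) (hxm : ∀ᶠ i in l, x i ∈ UHP)
    (hx : Tendsto x l (Bornology.cobounded ℂ))
    (hfx : Tendsto (f ∘ x) l (Bornology.cobounded ℂ)) :
    ∀ᶠ i in l, (x i).im / ‖x i‖ ^ 2 < (f (x i)).im / ‖f (x i)‖ ^ 2 := by
  have hlhs : Tendsto (fun i => (‖f (x i) - f u‖ / ‖f (x i)‖) ^ 2 * u.im) l (𝓝 u.im) := by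
    simpa using ((tendsto_norm_sub_div_norm hfx (f u)).pow 2).mul_const u.im
  have hrhs : Tendsto (fun i => (‖x i - u‖ / ‖x i‖) ^ 2 * (f u).im) l (𝓝 (f u).im) := by
    simpa using ((tendsto_norm_sub_div_norm hx u).pow 2).mul_const (f u).im
  filter_upwards [hxm, hrhs.eventually_lt hlhs hfu, hx.eventually_ne_cobounded 0,
    hfx.eventually_ne_cobounded 0] with i hi hlt hx0 hfx0
  have hxi : 0 < ‖x i‖ := norm_pos_iff.2 hx0
  have hfxi : 0 < ‖f (x i)‖ := norm_pos_iff.2 hfx0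
  have hxim : 0 < (x i).im := hi
  have hfim : 0 < (f (x i)).im := hm hi
  have hu0 : 0 < u.im := hu
  have hfu0 : 0 < (f u).im := hm hu
  have hsp := schwarzPick_UHP hf hm hi hu
  rw [div_lt_div_iff₀ (by positivity) (by positivity)]
  rw [div_pow, div_pow, div_mul_eq_mul_div, div_mul_eq_mul_div,
    div_lt_div_iff₀ (by positivity) (by positivity)] at hlt
  refine lt_of_mul_lt_mul_left (a := ‖f (x i) - f u‖ ^ 2 * u.im) ?_ (by positivity)
  calc ‖f (x i) - f u‖ ^ 2 * u.im * ((x i).im * ‖f (x i)‖ ^ 2)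
      = ‖f (x i) - f u‖ ^ 2 * ((x i).im * u.im) * ‖f (x i)‖ ^ 2 := by ring
    _ ≤ ‖x i - u‖ ^ 2 * ((f (x i)).im * (f u).im) * ‖f (x i)‖ ^ 2 := by gcongr
    _ = (f (x i)).im * (‖x i - u‖ ^ 2 * (f u).im * ‖f (x i)‖ ^ 2) := by ring
    _ < (f (x i)).im * (‖f (x i) - f u‖ ^ 2 * u.im * ‖x i‖ ^ 2) := by gcongr
    _ = ‖f (x i) - f u‖ ^ 2 * u.im * ((f (x i)).im * ‖x i‖ ^ 2) := by ring

theorem tendsto_cobounded_of_comp {c : ℝ} (hf : ContinuousOn f UHP) (hc0 : 0 < c)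
    (hc : ∀ᶠ i in l, c ≤ (x i).im) (hfx : Tendsto (f ∘ x) l (Bornology.cobounded ℂ)) :
    Tendsto x l (Bornology.cobounded ℂ) := by
  rw [← tendsto_norm_atTop_iff_cobounded, tendsto_atTop]
  intro R
  have hK : IsCompact (f '' (Metric.closedBall (0 : ℂ) R ∩ {z | c ≤ z.im})) :=
    (isCompact_closedBall_inter_le_im R c).image_of_continuousOn
      (hf.mono fun _ hz => hc0.trans_le hz.2)
  filter_upwards [hfx.eventually hK.isBounded, hc] with i hi hci
  by_contra hR
  exact hi ⟨x i, ⟨mem_closedBall_zero_iff.2 (not_le.1 hR).le, hci⟩, rfl⟩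

lemma not_eventually_lt_succ_of_tendsto_zero {a : ℕ → ℝ} (ha : ∀ n, 0 < a n)
    (hlim : Tendsto a atTop (𝓝 0)) : ¬ ∀ᶠ n in atTop, a n < a (n + 1) := by
  intro h
  obtain ⟨N, hN⟩ := eventually_atTop.1 h
  have hmono : Monotone fun n => a (n + N) := monotone_nat_of_le_succ fun n => by
    simpa only [add_right_comm] using (hN (n + N) le_add_self).le
  have hle := hmono.ge_of_tendsto (hlim.comp (tendsto_add_atTop_nat N)) 0
  exact (ha (0 + N)).not_ge hle

lemma tendsto_im_div_norm_sq (hx : Tendsto x l (Bornology.cobounded ℂ)) :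
    Tendsto (fun i => (x i).im / ‖x i‖ ^ 2) l (𝓝 0) := by
  refine squeeze_zero_norm (a := fun i => ‖(x i)⁻¹‖) (fun i => ?_)
    (by simpa using (tendsto_inv₀_cobounded.comp hx).norm)
  rw [norm_div, norm_pow, norm_norm, norm_inv, ← one_div, pow_two, ← div_div]
  gcongr
  exact div_le_one_of_le₀ (abs_im_le_norm _) (norm_nonneg _)

/-- If the orbit of `A ∘ B` escaped to `∞`, the heights `im z / ‖z‖ ^ 2` of the horocycles at `∞`
would tend to `0` along it, although both `B` and `A` eventually increase them. -/
theorem exists_isFixedPt_comp {A B : ℂ → ℂ} {c : ℝ} (hA : DifferentiableOn ℂ A UHP)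
    (hB : DifferentiableOn ℂ B UHP) (hc0 : 0 < c) (hAc : ∀ z ∈ UHP, c ≤ (A z).im)
    (hBc : ∀ z ∈ UHP, c ≤ (B z).im) (hAlt : ∃ u ∈ UHP, (A u).im < u.im)
    (hBlt : ∃ v ∈ UHP, (B v).im < v.im) : ∃ a ∈ UHP, Function.IsFixedPt (A ∘ B) a := by
  have hAm : MapsTo A UHP UHP := fun u hu => hc0.trans_le (hAc u hu)
  have hBm : MapsTo B UHP UHP := fun u hu => hc0.trans_le (hBc u hu)
  obtain ⟨u, hu, hAu⟩ := hAlt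
  obtain ⟨v, hv, hBv⟩ := hBlt
  by_contra hno
  let x (n : ℕ) : ℂ := (A ∘ B)^[n] u
  have hxm (n : ℕ) : x n ∈ UHP := (hAm.comp hBm).iterate n hu
  have hsucc (n : ℕ) : A (B (x n)) = x (n + 1) :=
    (Function.iterate_succ_apply' (A ∘ B) n u).symm
  have hx : Tendsto x atTop (Bornology.cobounded ℂ) := by
    rw [← tendsto_norm_atTop_iff_cobounded, tendsto_atTop]
    intro R
    by_contra hR
    refine hno (exists_isFixedPt_of_frequently_norm_iterate_le (hA.comp hB hBm) hc0
      (fun z hz => hAc _ (hBm hz)) hu (R := R) ((not_eventually.1 hR).mono fun n hn => ?_))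
    exact (not_le.1 hn).le
  have hABx : Tendsto (A ∘ B ∘ x) atTop (Bornology.cobounded ℂ) :=
    (hx.comp (tendsto_add_atTop_nat 1)).congr fun n => (hsucc n).symm
  have hBx : Tendsto (B ∘ x) atTop (Bornology.cobounded ℂ) :=
    tendsto_cobounded_of_comp hA.continuousOn hc0 (.of_forall fun n => hBc _ (hxm n)) hABx
  refine not_eventually_lt_succ_of_tendsto_zero
    (fun n => div_pos (hxm n) (pow_pos (norm_pos_iff.2 ?_) 2)) (tendsto_im_div_norm_sq hx) ?_
  · rintro h
    simpa [h, mem_UHP] using hxm n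
  · filter_upwards [eventually_im_div_norm_sq_lt hB hBm hv hBv (.of_forall hxm) hx hBx,
      eventually_im_div_norm_sq_lt hA hAm hu hAu (.of_forall fun n => hBm (hxm n)) hBx hABx]
      with n hBn hAn
    rw [← hsucc n]
    exact hBn.trans hAn

end Horocycles

section ImplicitFunction

variable {𝕜 E₁ E₂ F : Type*} [NontriviallyNormedField 𝕜]
  [NormedAddCommGroup E₁] [NormedSpace 𝕜 E₁] [CompleteSpace E₁]
  [NormedAddCommGroup E₂] [NormedSpace 𝕜 E₂] [CompleteSpace E₂]
  [NormedAddCommGroup F] [NormedSpace 𝕜 F] [CompleteSpace F]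

theorem differentiableAt_of_eventually_eq_of_apply_eq {Φ : E₁ × E₂ → F} {Φ' : E₁ × E₂ →L[𝕜] F}
    {g : E₁ → E₂} {x : E₁} (hΦ : HasStrictFDerivAt Φ Φ' (x, g x))
    (hinv : (Φ' ∘L .inr 𝕜 E₁ E₂).IsInvertible)
    (hg : ∀ᶠ p in 𝓝 (x, g x), Φ p = Φ (x, g x) → p.2 = g p.1) : DifferentiableAt 𝕜 g x := by
  let ψ : E₁ → E₂ := hΦ.implicitFunctionOfProdDomain hinv
  have hψ : Tendsto ψ (𝓝 x) (𝓝 (g x)) := hΦ.tendsto_implicitFunctionOfProdDomain hinv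
  have heq : g =ᶠ[𝓝 x] ψ := by
    filter_upwards [(tendsto_id.prodMk_nhds hψ).eventually hg,
      hΦ.eventually_apply_implicitFunctionOfProdDomain hinv] with y hy hy'
    exact (hy hy').symm
  exact ((hΦ.hasStrictFDerivAt_implicitFunctionOfProdDomain hinv).hasFDerivAt.congr_of_eventuallyEq
    heq).differentiableAt

end ImplicitFunction

section CauchyTransform

variable {μ : Measure ℝ} {z : ℂ}

lemma sub_ofReal_ne_zero (hz : z ∈ UHP) (t : ℝ) : z - t ≠ 0 := by
  intro h
  have him : z.im = 0 := by simpa using congrArg im h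
  exact (mem_UHP.1 hz).ne' him

lemma norm_inv_sub_ofReal_le (hz : z ∈ UHP) (t : ℝ) : ‖(z - t)⁻¹‖ ≤ z.im⁻¹ := by
  rw [norm_inv]
  refine inv_anti₀ hz ?_
  simpa using im_le_norm (z - t)

lemma continuous_inv_sub_ofReal (hz : z ∈ UHP) : Continuous fun t : ℝ => (z - t)⁻¹ :=
  Continuous.inv₀ (by fun_prop) (sub_ofReal_ne_zero hz)

lemma im_inv_sub_ofReal (z : ℂ) (t : ℝ) : ((z - t)⁻¹).im = -(z.im * ‖(z - t)⁻¹‖ ^ 2) := by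
  rw [inv_im, norm_inv, inv_pow, Complex.sq_norm, sub_im, ofReal_im, sub_zero, neg_div,
    div_eq_mul_inv]

section Finite

variable [IsFiniteMeasure μ]

lemma integrable_inv_sub_ofReal (hz : z ∈ UHP) : Integrable (fun t : ℝ => (z - t)⁻¹) μ :=
  .of_bound (continuous_inv_sub_ofReal hz).aestronglyMeasurable _
    (.of_forall (norm_inv_sub_ofReal_le hz))

lemma integrable_norm_inv_sub_ofReal_sq (hz : z ∈ UHP) :
    Integrable (fun t : ℝ => ‖(z - t)⁻¹‖ ^ 2) μ := by
  refine .of_bound ((continuous_inv_sub_ofReal hz).norm.pow 2).aestronglyMeasurable (z.im⁻¹ ^ 2)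
    (.of_forall fun t => ?_)
  rw [norm_pow, norm_norm]
  exact pow_le_pow_left₀ (norm_nonneg _) (norm_inv_sub_ofReal_le hz t) 2

theorem differentiableOn_cauchyT : DifferentiableOn ℂ (cauchyT μ) UHP := by
  intro z hz
  have hz0 : 0 < z.im / 2 := half_pos hz
  have hs : {x : ℂ | z.im / 2 < x.im} ∈ 𝓝 z :=
    (isOpen_lt continuous_const continuous_im).mem_nhds
      (half_lt_self (mem_UHP.1 hz))
  have hsub (x : ℂ) (hx : z.im / 2 < x.im) : x ∈ UHP := hz0.trans hx
  have hderiv := hasDerivAt_integral_of_dominated_loc_of_deriv_le (μ := μ)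
    (F := fun (x : ℂ) (t : ℝ) => (x - t)⁻¹) (F' := fun (x : ℂ) (t : ℝ) => -((x - t)⁻¹) ^ 2)
    (bound := fun _ => ((z.im / 2)⁻¹) ^ 2) hs
    (by filter_upwards [hs] with x hx
        exact (continuous_inv_sub_ofReal (hsub x hx)).aestronglyMeasurable)
    (integrable_inv_sub_ofReal hz)
    ((continuous_inv_sub_ofReal hz).pow 2).neg.aestronglyMeasurable
    (.of_forall fun t x hx => by
      rw [norm_neg, norm_pow]
      gcongr
      exact (norm_inv_sub_ofReal_le (hsub x hx) t).trans (inv_anti₀ hz0 (le_of_lt hx)))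
    (integrable_const _)
    (.of_forall fun t x hx => by
      simpa [neg_div] using!
        ((hasDerivAt_id x).sub_const (t : ℂ)).fun_inv (sub_ofReal_ne_zero (hsub x hx) t))
  exact hderiv.2.differentiableAt.differentiableWithinAt

lemma im_cauchyT (hz : z ∈ UHP) :
    (cauchyT μ z).im = -(z.im * ∫ t : ℝ, ‖(z - t)⁻¹‖ ^ 2 ∂μ) := calc
  (cauchyT μ z).im = ∫ t : ℝ, ((z - t)⁻¹).im ∂μ :=
    (imCLM.integral_comp_comm (integrable_inv_sub_ofReal hz)).symm
  _ = -(z.im * ∫ t : ℝ, ‖(z - t)⁻¹‖ ^ 2 ∂μ) := by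
    simp_rw [im_inv_sub_ofReal, integral_neg, integral_const_mul]

variable [NeZero μ]

lemma integral_norm_inv_sub_ofReal_sq_pos (hz : z ∈ UHP) :
    0 < ∫ t : ℝ, ‖(z - t)⁻¹‖ ^ 2 ∂μ := by
  rw [integral_pos_iff_support_of_nonneg (fun t => by positivity)
    (integrable_norm_inv_sub_ofReal_sq hz)]
  have hsupp : Function.support (fun t : ℝ => ‖(z - t)⁻¹‖ ^ 2) = univ :=
    eq_univ_of_forall fun t => pow_ne_zero 2 (norm_ne_zero_iff.2
      (inv_ne_zero (sub_ofReal_ne_zero hz t)))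
  rw [hsupp]
  exact Measure.measure_univ_pos.2 (NeZero.ne μ)

lemma cauchyT_ne_zero (hz : z ∈ UHP) : cauchyT μ z ≠ 0 := by
  intro h
  have him := im_cauchyT (μ := μ) hz
  rw [h, zero_im, zero_eq_neg] at him
  exact (mul_pos hz (integral_norm_inv_sub_ofReal_sq_pos hz)).ne' him

theorem differentiableOn_Fmeas : DifferentiableOn ℂ (Fmeas μ) UHP :=
  differentiableOn_cauchyT.inv fun _ => cauchyT_ne_zero

end Finite

variable [IsProbabilityMeasure μ]

lemma norm_cauchyT_sq_le (hz : z ∈ UHP) : ‖cauchyT μ z‖ ^ 2 ≤ ∫ t : ℝ, ‖(z - t)⁻¹‖ ^ 2 ∂μ :=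
  (convexOn_univ_norm.pow (fun _ _ => norm_nonneg _) 2).map_integral_le
    (continuous_norm.pow 2).continuousOn isClosed_univ (.of_forall fun _ => mem_univ _)
    (integrable_inv_sub_ofReal hz) (integrable_norm_inv_sub_ofReal_sq hz)

theorem im_le_im_Fmeas (hz : z ∈ UHP) : z.im ≤ (Fmeas μ z).im := by
  have hz0 : 0 < z.im := hz
  have hG : 0 < ‖cauchyT μ z‖ ^ 2 := pow_pos (norm_pos_iff.2 (cauchyT_ne_zero hz)) 2
  rw [Fmeas, inv_im, im_cauchyT hz, neg_neg, ← Complex.sq_norm, le_div_iff₀ hG]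
  gcongr
  exact norm_cauchyT_sq_le hz

theorem mapsTo_Fmeas : MapsTo (Fmeas μ) UHP UHP :=
  fun _ hz => (mem_UHP.1 hz).trans_le (im_le_im_Fmeas hz)

end CauchyTransform

section Asymptotics

open Asymptotics

variable {μ : Measure ℝ}

lemma ne_zero_of_mem_UHP {z : ℂ} (hz : z ∈ UHP) : z ≠ 0 := by
  rintro rfl
  simp [UHP] at hz

lemma I_mul_ofReal_mem_UHP {y : ℝ} (hy : 0 < y) : I * y ∈ UHP := by simpa [UHP] using hy

section Nontangential

variable {ι : Type*} {l : Filter ι} [l.IsCountablyGenerated] {W : ι → ℂ} {C : ℝ}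

lemma tendsto_mul_cauchyT_of_norm_le_mul_im [IsFiniteMeasure μ]
    (hW : Tendsto W l (Bornology.cobounded ℂ))
    (hC : ∀ᶠ i in l, W i ∈ UHP ∧ ‖W i‖ ≤ C * (W i).im) :
    Tendsto (fun i => W i * cauchyT μ (W i)) l (𝓝 (μ.real univ)) := by
  have hdct : Tendsto (fun i => ∫ t : ℝ, W i * (W i - t)⁻¹ ∂μ) l (𝓝 (∫ _ : ℝ, (1 : ℂ) ∂μ)) := by
    refine tendsto_integral_filter_of_dominated_convergence (fun _ => C) ?_ ?_
      (integrable_const _) (.of_forall fun t => ?_)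
    · filter_upwards [hC] with i hi
      exact ((continuous_inv_sub_ofReal hi.1).const_mul _).aestronglyMeasurable
    · filter_upwards [hC] with i hi
      refine .of_forall fun t => ?_
      rw [norm_mul]
      calc ‖W i‖ * ‖(W i - t)⁻¹‖ ≤ C * (W i).im * (W i).im⁻¹ := by
            gcongr
            exacts [(norm_nonneg _).trans hi.2, hi.2, norm_inv_sub_ofReal_le hi.1 t]
        _ = C := mul_inv_cancel_right₀ (mem_UHP.1 hi.1).ne' C
    · have hlim : Tendsto (fun i => (1 - t * (W i)⁻¹)⁻¹) l (𝓝 1) := by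
        simpa using
          (((tendsto_inv₀_cobounded.comp hW).const_mul (t : ℂ)).const_sub 1).inv₀ (by simp)
      refine hlim.congr' ?_
      filter_upwards [hC] with i hi
      have := ne_zero_of_mem_UHP hi.1
      have := sub_ofReal_ne_zero hi.1 t
      field_simp
  simpa [integral_const_mul, cauchyT] using hdct

theorem Fmeas_comp_isEquivalent_of_norm_le_mul_im [IsProbabilityMeasure μ]
    (hW : Tendsto W l (Bornology.cobounded ℂ))
    (hC : ∀ᶠ i in l, W i ∈ UHP ∧ ‖W i‖ ≤ C * (W i).im) :
    (fun i => Fmeas μ (W i)) ~[l] W := by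
  rw [isEquivalent_iff_tendsto_one (hC.mono fun i hi => ne_zero_of_mem_UHP hi.1)]
  have hlim : Tendsto (fun i => (W i * cauchyT μ (W i))⁻¹) l (𝓝 1) := by
    simpa only [probReal_univ, ofReal_one, inv_one] using
      (tendsto_mul_cauchyT_of_norm_le_mul_im (μ := μ) hW hC).inv₀ (by simp)
  refine hlim.congr fun i => ?_
  rw [Pi.div_apply, Fmeas, mul_inv, mul_comm, div_eq_mul_inv]

end Nontangential

lemma norm_I_mul_ofReal {y : ℝ} (hy : 0 < y) : ‖I * (y : ℂ)‖ = y := by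
  rw [norm_mul, norm_I, one_mul, Complex.norm_of_nonneg hy.le]

lemma tendsto_I_mul_ofReal_cobounded :
    Tendsto (fun y : ℝ => I * (y : ℂ)) atTop (Bornology.cobounded ℂ) := by
  rw [← tendsto_norm_atTop_iff_cobounded]
  exact tendsto_id.congr' ((eventually_gt_atTop 0).mono fun y hy => (norm_I_mul_ofReal hy).symm)

variable {W : ℝ → ℂ}

lemma tendsto_cobounded_of_isEquivalent (hW : W ~[atTop] fun y => I * y) :
    Tendsto W atTop (Bornology.cobounded ℂ) := by
  rw [← tendsto_norm_atTop_iff_cobounded]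
  exact hW.isTheta.tendsto_norm_atTop_iff.2
    (tendsto_norm_atTop_iff_cobounded.2 tendsto_I_mul_ofReal_cobounded)

lemma eventually_norm_le_three_mul_im (hW : W ~[atTop] fun y => I * y) :
    ∀ᶠ y in atTop, W y ∈ UHP ∧ ‖W y‖ ≤ 3 * (W y).im := by
  filter_upwards [hW.isLittleO.def (half_pos one_pos), eventually_gt_atTop 0] with y hy hy0
  rw [norm_I_mul_ofReal hy0, Pi.sub_apply] at hy
  have him : y / 2 ≤ (W y).im := by
    have h := (abs_le.1 ((abs_im_le_norm _).trans hy)).1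
    rw [sub_im, I_mul_im, ofReal_re] at h
    linarith
  have hnorm : ‖W y‖ ≤ ‖W y - I * y‖ + y := by
    simpa only [sub_add_cancel, norm_I_mul_ofReal hy0] using norm_add_le (W y - I * y) (I * y)
  exact ⟨(half_pos hy0).trans_le him, by linarith⟩

theorem Fmeas_comp_isEquivalent_I_mul [IsProbabilityMeasure μ] (hW : W ~[atTop] fun y => I * y) :
    (fun y => Fmeas μ (W y)) ~[atTop] fun y => I * y :=
  (Fmeas_comp_isEquivalent_of_norm_le_mul_im (tendsto_cobounded_of_isEquivalent hW)
    (eventually_norm_le_three_mul_im hW)).trans hW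

end Asymptotics

section PoissonIntegral

open InnerProductSpace Metric

lemma exists_probabilityMeasure_integral_eq_intervalIntegral {X : Type*} [TopologicalSpace X]
    [MeasurableSpace X] [BorelSpace X] {γ : ℝ → X} (hγ : Continuous γ) {d : ℝ → ℝ}
    (hd : Continuous d) (hd0 : ∀ θ, 0 ≤ d θ) {a b : ℝ} (hab : a ≤ b) (h1 : ∫ θ in a..b, d θ = 1) :
    ∃ σ : ProbabilityMeasure X, ∀ g : X → ℝ, Continuous g →
      ∫ x, g x ∂(σ : Measure X) = ∫ θ in a..b, d θ * g (γ θ) := by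
  let m : Measure ℝ := (volume.restrict (Ioc a b)).withDensity fun θ => ENNReal.ofReal (d θ)
  have : IsProbabilityMeasure m := by
    refine ⟨?_⟩
    rw [withDensity_apply _ .univ, Measure.restrict_univ, ← ofReal_integral_eq_lintegral_ofReal
      (hd.integrableOn_Icc.mono_set Ioc_subset_Icc_self) (.of_forall hd0),
      ← intervalIntegral.integral_of_le hab, h1, ENNReal.ofReal_one]
  refine ⟨⟨m.map γ, Measure.isProbabilityMeasure_map hγ.aemeasurable⟩, fun g hg => ?_⟩
  rw [ProbabilityMeasure.coe_mk, integral_map hγ.aemeasurable hg.aestronglyMeasurable,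
    integral_withDensity_eq_integral_toReal_smul hd.measurable.ennreal_ofReal
      (.of_forall fun _ => ENNReal.ofReal_lt_top), intervalIntegral.integral_of_le hab]
  simp_rw [ENNReal.toReal_ofReal (hd0 _), smul_eq_mul]

lemma continuous_poissonKernel_sphere {c w : ℂ} {R : ℝ} (hw : w ∈ ball c R) :
    Continuous fun ζ : sphere c R => poissonKernel c w ζ := by
  refine Continuous.div (by fun_prop) (by fun_prop) fun ζ => ?_
  rw [sub_sub_sub_cancel_right]
  refine pow_ne_zero 2 (norm_ne_zero_iff.2 (sub_ne_zero.2 ?_))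
  rintro h
  exact (mem_ball.1 hw).ne (h ▸ mem_sphere.1 ζ.2)

lemma poissonKernel_zero_mul {r : ℂ} (hr : r ≠ 0) (w ζ : ℂ) :
    poissonKernel 0 (r * w) (r * ζ) = poissonKernel 0 w ζ := by
  have := norm_ne_zero_iff.2 hr
  simp only [poissonKernel, sub_zero, ← mul_sub, norm_mul, mul_pow]
  rw [mul_div_mul_left _ _ (pow_ne_zero 2 this)]

lemma exists_integral_poissonKernel_eq_of_closedBall {h : ℂ → ℝ} {r : ℝ} (hr : 0 < r)
    (hh : HarmonicOnNhd h (closedBall 0 r)) (hpos : ∀ ζ ∈ sphere (0 : ℂ) r, 0 ≤ h ζ)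
    (h0 : h 0 = 1) :
    ∃ σ : ProbabilityMeasure (sphere (0 : ℂ) 1), ∀ w ∈ ball (0 : ℂ) 1,
      h (r * w) = ∫ ζ, poissonKernel 0 w ζ ∂(σ : Measure (sphere (0 : ℂ) 1)) := by
  have hcont : Continuous fun θ => h (circleMap 0 r θ) :=
    hh.continuousOn.comp_continuous (continuous_circleMap 0 r)
      (circleMap_mem_closedBall 0 hr.le)
  obtain ⟨σ, hσ⟩ := exists_probabilityMeasure_integral_eq_intervalIntegral
    (γ := fun θ => (⟨circleMap 0 1 θ, circleMap_mem_sphere 0 zero_le_one θ⟩ : sphere (0 : ℂ) 1))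
    ((continuous_circleMap 0 1).subtype_mk _) (hcont.const_mul (2 * Real.pi)⁻¹)
    (fun θ => mul_nonneg (by positivity) (hpos _ (circleMap_mem_sphere 0 hr.le θ)))
    Real.two_pi_pos.le (by
      rw [intervalIntegral.integral_const_mul, ← smul_eq_mul, ← Real.circleAverage_def, ← h0]
      exact InnerProductSpace.HarmonicOnNhd.circleAverage_eq (by rwa [abs_of_pos hr]))
  refine ⟨σ, fun w hw => ?_⟩
  have hrw : (r : ℂ) * w ∈ ball 0 r := by
    rw [mem_ball_zero_iff] at hw ⊢
    rw [norm_mul, Complex.norm_of_nonneg hr.le]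
    exact mul_lt_of_lt_one_right hr hw
  have hscale (θ : ℝ) : circleMap 0 r θ = r * circleMap 0 1 θ := by simp [circleMap]
  rw [hσ _ (continuous_poissonKernel_sphere hw), ← hh.circleAverage_poissonKernel_smul hrw,
    Real.circleAverage_def, smul_eq_mul, ← intervalIntegral.integral_const_mul]
  congr with θ
  rw [Pi.smul_apply', hscale, poissonKernel_zero_mul (ofReal_ne_zero.2 hr.ne'), smul_eq_mul]
  ring

/-- **Herglotz's theorem**. -/
theorem exists_integral_poissonKernel_eq_of_ball {h : ℂ → ℝ} (hh : HarmonicOnNhd h (ball 0 1))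
    (hpos : ∀ ζ ∈ ball (0 : ℂ) 1, 0 ≤ h ζ) (h0 : h 0 = 1) :
    ∃ σ : ProbabilityMeasure (sphere (0 : ℂ) 1), ∀ w ∈ ball (0 : ℂ) 1,
      h w = ∫ ζ, poissonKernel 0 w ζ ∂(σ : Measure (sphere (0 : ℂ) 1)) := by
  obtain ⟨r, -, hr, hr1⟩ := exists_seq_strictMono_tendsto' (zero_lt_one (α := ℝ))
  have hsub (n : ℕ) : closedBall (0 : ℂ) (r n) ⊆ ball 0 1 := closedBall_subset_ball (hr n).2
  choose σ hσ using fun n => exists_integral_poissonKernel_eq_of_closedBall (hr n).1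
    (hh.mono (hsub n)) (fun ζ hζ => hpos ζ (hsub n (sphere_subset_closedBall hζ))) h0
  let U : Ultrafilter ℕ := .of atTop
  refine ⟨(U.map σ).lim, fun w hw => ?_⟩
  have hσlim := ProbabilityMeasure.tendsto_iff_forall_integral_tendsto.1 (U.map σ).le_nhds_lim
    (.mkOfCompact ⟨_, continuous_poissonKernel_sphere hw⟩)
  have hrw : Tendsto (fun n => (r n : ℂ) * w) atTop (𝓝 w) := by
    simpa using ((continuous_ofReal.tendsto 1).comp hr1).mul_const w
  have hhlim : Tendsto (fun n => h (r n * w)) U (𝓝 (h w)) :=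
    ((hh.continuousOn.continuousAt (isOpen_ball.mem_nhds hw)).tendsto.comp hrw).mono_left
      (Ultrafilter.of_le atTop)
  exact tendsto_nhds_unique hhlim (hσlim.congr fun n => (hσ n w hw).symm)

end PoissonIntegral

section Nevanlinna

open InnerProductSpace Metric

lemma I_mem_UHP : I ∈ UHP := by simp [UHP]

lemma exists_im_eq_integral_poissonKernel {N : ℂ → ℂ} (hN : DifferentiableOn ℂ N UHP)
    (hm : MapsTo N UHP UHP) :
    ∃ σ : ProbabilityMeasure (sphere (0 : ℂ) 1), ∀ z ∈ UHP, (N z).im =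
      (N I).im * ∫ ζ, poissonKernel 0 (cayley I z) ζ ∂(σ : Measure (sphere (0 : ℂ) 1)) := by
  have hI : 0 < (N I).im := hm I_mem_UHP
  have hmaps : MapsTo (cayleyInv I) (ball 0 1) UHP := fun _ => cayleyInv_mem_UHP I_mem_UHP
  have hharm : HarmonicOnNhd (fun ζ => (N I).im⁻¹ * (N (cayleyInv I ζ)).im) (ball 0 1) :=
    fun ζ hζ => (((hN.comp (differentiableOn_cayleyInv I) hmaps).analyticAt
      (isOpen_ball.mem_nhds hζ)).harmonicAt_im).const_smul
  obtain ⟨σ, hσ⟩ := exists_integral_poissonKernel_eq_of_ball hharm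
    (fun ζ hζ => mul_nonneg (inv_nonneg.2 hI.le) (le_of_lt (hm (hmaps hζ))))
    (by rw [cayleyInv_zero, inv_mul_cancel₀ hI.ne'])
  refine ⟨σ, fun z hz => ?_⟩
  rw [← hσ _ (cayley_mem_ball I_mem_UHP hz), cayleyInv_cayley I_mem_UHP hz,
    mul_inv_cancel_left₀ hI.ne']

lemma norm_I_sub_conj_I : ‖I - starRingEnd ℂ I‖ = 2 := by
  rw [sub_conj, I_im, norm_mul, norm_I, mul_one, mul_one, Complex.norm_of_nonneg zero_le_two]

lemma poissonKernel_cayley_one {z : ℂ} (hz : z ∈ UHP) :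
    poissonKernel 0 (cayley I z) 1 = z.im := by
  have h := norm_sub_conj_pos I_mem_UHP hz
  rw [poissonKernel, sub_zero, sub_zero, norm_one, one_pow, one_sub_norm_cayley_sq I_mem_UHP hz,
    one_sub_cayley (norm_pos_iff.1 h), I_im, norm_div, norm_I_sub_conj_I]
  field_simp
  ring

/-- The identification of the unit circle minus `1` with the real line that extends `cayleyInv I`;
its value at `1` is junk. -/
noncomputable def circleToReal (ζ : sphere (0 : ℂ) 1) : ℝ := (cayleyInv I ζ).re

lemma cayley_circleToReal {ζ : sphere (0 : ℂ) 1} (h1 : (ζ : ℂ) ≠ 1) :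
    cayley I (circleToReal ζ) = ζ := by
  have hreal : ((circleToReal ζ : ℝ) : ℂ) = cayleyInv I ζ := by
    refine Complex.ext rfl ?_
    rw [ofReal_im, im_cayleyInv, norm_eq_of_mem_sphere, one_pow, sub_self, mul_zero, zero_div]
  rw [hreal, cayley_cayleyInv I_mem_UHP h1]

lemma poissonKernel_cayley_of_ne_one {z : ℂ} (hz : z ∈ UHP) {ζ : sphere (0 : ℂ) 1}
    (h1 : (ζ : ℂ) ≠ 1) :
    poissonKernel 0 (cayley I z) ζ =
      z.im * ((1 + circleToReal ζ ^ 2) * ‖(z - circleToReal ζ)⁻¹‖ ^ 2) := by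
  have hcayley := cayley_circleToReal h1
  set t := circleToReal ζ
  have h := norm_sub_conj_pos I_mem_UHP hz
  have ht : ‖(t : ℂ) - starRingEnd ℂ I‖ ^ 2 = 1 + t ^ 2 := by
    rw [conj_I, Complex.sq_norm, normSq_apply]
    simp only [sub_neg_eq_add, add_re, ofReal_re, I_re, add_im, ofReal_im, I_im]
    ring
  have ht0 : ‖(t : ℂ) - starRingEnd ℂ I‖ ≠ 0 := (pow_ne_zero_iff two_ne_zero).1 (by
    rw [ht]
    positivity)
  have hzt := norm_ne_zero_iff.2 (sub_ofReal_ne_zero hz t)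
  rw [poissonKernel, sub_zero, sub_zero, norm_eq_of_mem_sphere, one_pow,
    one_sub_norm_cayley_sq I_mem_UHP hz, ← hcayley,
    cayley_sub_cayley (norm_ne_zero_iff.1 ht0) (norm_pos_iff.1 h), I_im, norm_div, norm_mul,
    norm_mul, norm_I_sub_conj_I, norm_sub_rev (t : ℂ) z, norm_inv, ← ht]
  field_simp
  ring

lemma measurable_circleToReal : Measurable circleToReal := by
  unfold circleToReal cayleyInv
  fun_prop

/-- The imaginary part of **Nevanlinna's representation**; the full representation is
`N z = a + α * z + ∫ t, (1 + t * z) / (t - z) ∂τ`. -/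
theorem exists_im_eq_im_mul_add_integral {N : ℂ → ℂ} (hN : DifferentiableOn ℂ N UHP)
    (hm : MapsTo N UHP UHP) :
    ∃ α : ℝ, 0 ≤ α ∧ ∃ τ : Measure ℝ, IsFiniteMeasure τ ∧ ∀ z ∈ UHP,
      (N z).im = z.im * (α + ∫ t : ℝ, (1 + t ^ 2) * ‖(z - t)⁻¹‖ ^ 2 ∂τ) := by
  obtain ⟨σ, hσ⟩ := exists_im_eq_integral_poissonKernel hN hm
  let u : ℝ := (N I).im
  have hu : 0 ≤ u := le_of_lt (hm I_mem_UHP)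
  let p : sphere (0 : ℂ) 1 := ⟨1, by simp⟩
  let τ : Measure ℝ := u.toNNReal • ((σ : Measure _).restrict {p}ᶜ).map circleToReal
  refine ⟨u * (σ : Measure _).real {p}, by positivity, τ, inferInstance, fun z hz => ?_⟩
  have hker : Continuous fun ζ : sphere (0 : ℂ) 1 => poissonKernel 0 (cayley I z) ζ :=
    continuous_poissonKernel_sphere (cayley_mem_ball I_mem_UHP hz)
  have hp : ∫ ζ in {p}, poissonKernel 0 (cayley I z) ζ ∂(σ : Measure _) =
      (σ : Measure _).real {p} * z.im := by
    rw [integral_singleton, poissonKernel_cayley_one hz, smul_eq_mul]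
  have hpc : ∫ ζ in {p}ᶜ, poissonKernel 0 (cayley I z) ζ ∂(σ : Measure _) =
      z.im * ∫ ζ in {p}ᶜ, (1 + circleToReal ζ ^ 2) * ‖(z - circleToReal ζ)⁻¹‖ ^ 2
        ∂(σ : Measure _) := by
    rw [← integral_const_mul]
    refine setIntegral_congr_fun (measurableSet_singleton p).compl fun ζ hζ => ?_
    exact poissonKernel_cayley_of_ne_one hz fun h => hζ (Subtype.ext h)
  have hcont : Continuous fun t : ℝ => (1 + t ^ 2) * ‖(z - t)⁻¹‖ ^ 2 :=
    (by fun_prop : Continuous fun t : ℝ => 1 + t ^ 2).mul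
      ((continuous_inv_sub_ofReal hz).norm.pow 2)
  rw [hσ z hz, ← integral_add_compl (measurableSet_singleton p)
    (hker.integrable_of_hasCompactSupport (.of_compactSpace _)), hp, hpc,
    integral_smul_nnreal_measure, integral_map measurable_circleToReal.aemeasurable
      hcont.aestronglyMeasurable, NNReal.smul_def, Real.coe_toNNReal _ hu, smul_eq_mul]
  ring

lemma norm_inv_I_mul_sub_ofReal_sq (y t : ℝ) : ‖(I * y - t)⁻¹‖ ^ 2 = (y ^ 2 + t ^ 2)⁻¹ := by
  rw [norm_inv, inv_pow, Complex.sq_norm, normSq_apply]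
  simp only [sub_re, I_mul_re, ofReal_im, ofReal_re, sub_im, I_mul_im]
  ring

lemma monotoneOn_sq_mul_inv_sq_add_sq (t : ℝ) :
    MonotoneOn (fun y : ℝ => y ^ 2 * (y ^ 2 + t ^ 2)⁻¹) (Ici 0) := by
  intro x (hx : 0 ≤ x) y _ hxy
  dsimp only
  rcases hx.eq_or_lt with rfl | hx
  · rw [zero_pow two_ne_zero, zero_mul]
    positivity
  have hy : 0 < y := hx.trans_le hxy
  rw [← div_eq_mul_inv, ← div_eq_mul_inv, div_le_div_iff₀ (by positivity) (by positivity)]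
  have : x ^ 2 * t ^ 2 ≤ y ^ 2 * t ^ 2 := by gcongr
  linarith

lemma tendsto_sq_mul_inv_sq_add_sq (t : ℝ) :
    Tendsto (fun y : ℝ => y ^ 2 * (y ^ 2 + t ^ 2)⁻¹) atTop (𝓝 1) := by
  have hlim : Tendsto (fun y : ℝ => (1 + t ^ 2 / y ^ 2)⁻¹) atTop (𝓝 (1 + 0)⁻¹) :=
    ((tendsto_const_nhds.div_atTop (tendsto_pow_atTop two_ne_zero)).const_add 1).inv₀ (by simp)
  rw [add_zero, inv_one] at hlim
  refine hlim.congr' ((eventually_gt_atTop 0).mono fun y hy => ?_)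
  field_simp

lemma integrable_one_add_sq_mul_inv_sq_add_sq {τ : Measure ℝ} [IsFiniteMeasure τ] {y : ℝ}
    (hy : 1 ≤ y) : Integrable (fun t : ℝ => (1 + t ^ 2) * (y ^ 2 + t ^ 2)⁻¹) τ := by
  refine .of_bound (by fun_prop) 1 (.of_forall fun t => ?_)
  have hy2 : 1 ≤ y ^ 2 := one_le_pow₀ hy
  rw [Real.norm_of_nonneg (by positivity), ← div_eq_mul_inv, div_le_one (by positivity)]
  gcongr

lemma eq_zero_and_lintegral_one_add_sq_eq_one {τ : Measure ℝ} [IsFiniteMeasure τ] {α : ℝ}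
    (hα : 0 ≤ α) (h : Tendsto (fun y : ℝ => y ^ 2 *
      (α + ∫ t : ℝ, (1 + t ^ 2) * (y ^ 2 + t ^ 2)⁻¹ ∂τ)) atTop (𝓝 1)) :
    α = 0 ∧ ∫⁻ t : ℝ, ENNReal.ofReal (1 + t ^ 2) ∂τ = 1 := by
  obtain rfl : α = 0 := by
    by_contra hα0
    refine not_tendsto_nhds_of_tendsto_atTop (tendsto_atTop_mono (fun y => ?_)
      ((tendsto_pow_atTop two_ne_zero).atTop_mul_const (hα.lt_of_ne' hα0))) _ h
    gcongr
    exact le_add_of_nonneg_right (integral_nonneg fun t => by positivity)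
  refine ⟨rfl, ?_⟩
  simp only [zero_add] at h
  let k (n : ℕ) (t : ℝ) : ENNReal :=
    ENNReal.ofReal ((1 + t ^ 2) * ((n : ℝ) ^ 2 * ((n : ℝ) ^ 2 + t ^ 2)⁻¹))
  have hk : Tendsto (fun n => ∫⁻ t, k n t ∂τ) atTop (𝓝 1) := by
    rw [← ENNReal.ofReal_one]
    refine (ENNReal.tendsto_ofReal (h.comp tendsto_natCast_atTop_atTop)).congr' ?_
    filter_upwards [eventually_ge_atTop 1] with n hn
    simp only [k, Function.comp_apply, mul_left_comm _ ((n : ℝ) ^ 2)]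
    rw [← integral_const_mul, ofReal_integral_eq_lintegral_ofReal
      ((integrable_one_add_sq_mul_inv_sq_add_sq (Nat.one_le_cast.2 hn)).const_mul _)
      (.of_forall fun t => by positivity)]
  refine tendsto_nhds_unique (lintegral_tendsto_of_tendsto_of_monotone (fun n => ?_)
    (.of_forall fun t m n hmn => ?_) (.of_forall fun t => ENNReal.tendsto_ofReal ?_)) hk
  · fun_prop
  · exact ENNReal.ofReal_le_ofReal (mul_le_mul_of_nonneg_left (monotoneOn_sq_mul_inv_sq_add_sq t
      (mem_Ici.2 m.cast_nonneg) (mem_Ici.2 n.cast_nonneg) (Nat.cast_le.2 hmn)) (by positivity))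
  · simpa only [mul_one, Function.comp_apply] using ((tendsto_sq_mul_inv_sq_add_sq t).comp
      tendsto_natCast_atTop_atTop).const_mul (1 + t ^ 2)

theorem exists_isProbabilityMeasure_im_cauchyT_eq {N : ℂ → ℂ} (hN : DifferentiableOn ℂ N UHP)
    (hm : MapsTo N UHP UHP) (hlim : Tendsto (fun y : ℝ => y * (N (I * y)).im) atTop (𝓝 1)) :
    ∃ lam : Measure ℝ, IsProbabilityMeasure lam ∧
      ∀ z ∈ UHP, (cauchyT lam z).im = -(N z).im := by
  obtain ⟨α, hα, τ, hτ, hrep⟩ := exists_im_eq_im_mul_add_integral hN hm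
  obtain ⟨rfl, hmass⟩ := eq_zero_and_lintegral_one_add_sq_eq_one (τ := τ) hα <| by
    refine hlim.congr' ((eventually_gt_atTop 0).mono fun y hy => ?_)
    rw [hrep _ (I_mul_ofReal_mem_UHP hy), I_mul_im, ofReal_re, ← mul_assoc, ← sq]
    simp_rw [norm_inv_I_mul_sub_ofReal_sq]
  let lam : Measure ℝ := τ.withDensity fun t => ENNReal.ofReal (1 + t ^ 2)
  have hlam : IsProbabilityMeasure lam :=
    ⟨by rw [withDensity_apply _ .univ, Measure.restrict_univ, hmass]⟩
  refine ⟨lam, hlam, fun z hz => ?_⟩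
  have hint : ∫ t : ℝ, ‖(z - t)⁻¹‖ ^ 2 ∂lam = ∫ t : ℝ, (1 + t ^ 2) * ‖(z - t)⁻¹‖ ^ 2 ∂τ := by
    rw [integral_withDensity_eq_integral_toReal_smul (by fun_prop)
      (.of_forall fun _ => ENNReal.ofReal_lt_top)]
    refine integral_congr_ae (.of_forall fun t => ?_)
    dsimp only
    rw [ENNReal.toReal_ofReal (by positivity), smul_eq_mul]
  rw [im_cauchyT hz, hint, hrep z hz, zero_add]

lemma isPreconnected_UHP : IsPreconnected UHP := (convex_halfSpace_im_gt 0).isPreconnected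

open Asymptotics

lemma tendsto_inv_of_isEquivalent_I_mul {G : ℝ → ℂ} (hG : G ~[atTop] fun y => I * y) :
    Tendsto (fun y => (G y)⁻¹) atTop (𝓝 0) :=
  tendsto_inv₀_cobounded.comp (tendsto_cobounded_of_isEquivalent hG)

lemma tendsto_mul_im_neg_inv {G : ℝ → ℂ} (hG : G ~[atTop] fun y => I * y) :
    Tendsto (fun y => y * (-(G y)⁻¹).im) atTop (𝓝 1) := by
  have hne : ∀ᶠ y in atTop, G y ≠ 0 :=
    (tendsto_cobounded_of_isEquivalent hG).eventually_ne_cobounded 0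
  have hre := (continuous_re.tendsto 1).comp ((isEquivalent_iff_tendsto_one hne).1 hG.symm)
  rw [one_re] at hre
  refine hre.congr fun y => ?_
  simp [div_eq_mul_inv]

/-- A function with the asymptotics of `F_λ` is some `F_λ`, by the Nevanlinna representation of
`-1 / F`. -/
theorem exists_isProbabilityMeasure_Fmeas_eq {F : ℂ → ℂ} (hF : DifferentiableOn ℂ F UHP)
    (hm : MapsTo F UHP UHP) (hasym : (fun y : ℝ => F (I * y)) ~[atTop] fun y => I * y) :
    ∃ lam : Measure ℝ, IsProbabilityMeasure lam ∧ EqOn (Fmeas lam) F UHP := by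
  have hF0 (z : ℂ) (hz : z ∈ UHP) : F z ≠ 0 := ne_zero_of_mem_UHP (hm hz)
  have hN : DifferentiableOn ℂ (fun z => -(F z)⁻¹) UHP := (hF.fun_inv hF0).fun_neg
  have hNm : MapsTo (fun z => -(F z)⁻¹) UHP UHP := fun z hz => by
    rw [mem_UHP, neg_im, inv_im, neg_div, neg_neg]
    exact div_pos (hm hz) (normSq_pos.2 (hF0 z hz))
  obtain ⟨lam, hlam, him⟩ := exists_isProbabilityMeasure_im_cauchyT_eq hN hNm
    (tendsto_mul_im_neg_inv hasym)
  refine ⟨lam, hlam, ?_⟩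
  obtain ⟨c, hc⟩ := AnalyticOnNhd.eq_const_of_im_eq_const (c₀ := 0)
    ((differentiableOn_cauchyT (μ := lam)).add hN |>.analyticOnNhd isOpen_UHP)
    (fun z hz => by simp [him z hz]) isOpen_UHP ⟨⟨I, I_mem_UHP⟩, isPreconnected_UHP⟩
  have hc0 : c = 0 := by
    refine tendsto_nhds_unique (tendsto_const_nhds.congr' ?_) (by
      simpa using (tendsto_inv_of_isEquivalent_I_mul (Fmeas_comp_isEquivalent_I_mul (μ := lam)
        .refl)).sub (tendsto_inv_of_isEquivalent_I_mul hasym))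
    filter_upwards [eventually_gt_atTop 0] with y hy
    rw [← hc _ (I_mul_ofReal_mem_UHP hy)]
    simp [Fmeas, sub_eq_add_neg]
  intro z hz
  have hG : cauchyT lam z = (F z)⁻¹ := add_neg_eq_zero.1 ((hc z hz).trans hc0)
  rw [Fmeas, hG, inv_inv]

end Nevanlinna

section Subordination

open Asymptotics Function

/-- The map `w ↦ z + H_μ(w)`, where `H_μ(w) = F_μ(w) - w`. The equations
`F_μ(w₁) = F_ν(w₂) = w₁ + w₂ - z` say that it sends `w₁` to `w₂`, and that its analogue for `ν`
sends `w₂` to `w₁`. -/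
noncomputable def subordStep (μ : Measure ℝ) (z w : ℂ) : ℂ := z + (Fmeas μ w - w)

/-- The subordination function `ω₁` of `μ ⊞ ν` with respect to `μ`: its value at `z ∈ UHP` is the
unique fixed point in `UHP` of `subordStep ν z ∘ subordStep μ z`. Its values outside `UHP` are
junk. -/
noncomputable def subordination (μ ν : Measure ℝ) (z : ℂ) : ℂ :=
  Classical.epsilon fun w => w ∈ UHP ∧ IsFixedPt (subordStep ν z ∘ subordStep μ z) w

lemma subordStep_eq_iff {μ : Measure ℝ} {z w₁ w₂ : ℂ} :
    subordStep μ z w₁ = w₂ ↔ Fmeas μ w₁ = w₁ + w₂ - z := by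
  rw [subordStep]
  constructor <;> intro h <;> linear_combination h

lemma isFixedPt_subordStep_comp_iff {μ ν : Measure ℝ} {z w : ℂ} :
    IsFixedPt (subordStep ν z ∘ subordStep μ z) w ↔ Fmeas ν (subordStep μ z w) = Fmeas μ w := by
  rw [IsFixedPt, comp_apply, subordStep_eq_iff, subordStep]
  ring_nf

variable {μ ν : Measure ℝ} [IsProbabilityMeasure μ] [IsProbabilityMeasure ν] {z w : ℂ}

lemma im_le_im_subordStep (z : ℂ) (hw : w ∈ UHP) : z.im ≤ (subordStep μ z w).im := by
  rw [subordStep, add_im, sub_im]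
  linarith [im_le_im_Fmeas (μ := μ) hw]

lemma mapsTo_subordStep (hz : z ∈ UHP) : MapsTo (subordStep μ z) UHP UHP :=
  fun _ hw => (mem_UHP.1 hz).trans_le (im_le_im_subordStep z hw)

lemma differentiableOn_subordStep (z : ℂ) : DifferentiableOn ℂ (subordStep μ z) UHP :=
  (differentiableOn_Fmeas.sub differentiableOn_id).const_add z

lemma analyticAt_subordStep {E : Type*} [NormedAddCommGroup E] [NormedSpace ℂ E] {f g : E → ℂ}
    {x : E} (hf : AnalyticAt ℂ f x) (hg : AnalyticAt ℂ g x) (hx : g x ∈ UHP) :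
    AnalyticAt ℂ (fun x => subordStep μ (f x) (g x)) x :=
  have hF : AnalyticAt ℂ (Fmeas μ) (g x) :=
    differentiableOn_Fmeas.analyticAt (isOpen_UHP.mem_nhds hx)
  hf.fun_add ((hF.fun_comp hg).fun_sub hg)

lemma differentiableOn_subordStep_comp (hz : z ∈ UHP) :
    DifferentiableOn ℂ (subordStep ν z ∘ subordStep μ z) UHP :=
  (differentiableOn_subordStep z).comp (differentiableOn_subordStep z) (mapsTo_subordStep hz)

lemma im_le_im_subordStep_comp (hz : z ∈ UHP) (w : ℂ) (hw : w ∈ UHP) :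
    z.im ≤ ((subordStep ν z ∘ subordStep μ z) w).im :=
  im_le_im_subordStep z (mapsTo_subordStep hz hw)

lemma exists_im_subordStep_lt (μ : Measure ℝ) [IsProbabilityMeasure μ] (z : ℂ) :
    ∃ u ∈ UHP, (subordStep μ z u).im < u.im := by
  have hF : (fun y : ℝ => Fmeas μ (I * y)) ~[atTop] fun y => I * y :=
    Fmeas_comp_isEquivalent_I_mul .refl
  obtain ⟨y, hy, hy0, hyz⟩ := ((hF.isLittleO.def (half_pos one_pos)).and
    ((eventually_gt_atTop 0).and (eventually_gt_atTop (2 * z.im)))).exists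
  refine ⟨I * y, I_mul_ofReal_mem_UHP hy0, ?_⟩
  rw [norm_I_mul_ofReal hy0, Pi.sub_apply] at hy
  rw [subordStep, add_im, I_mul_im, ofReal_re]
  linarith [(im_le_norm _).trans hy]

theorem exists_isFixedPt_subordStep_comp (μ ν : Measure ℝ) [IsProbabilityMeasure μ]
    [IsProbabilityMeasure ν] (hz : z ∈ UHP) :
    ∃ w ∈ UHP, IsFixedPt (subordStep ν z ∘ subordStep μ z) w :=
  exists_isFixedPt_comp (differentiableOn_subordStep z) (differentiableOn_subordStep z) hz
    (fun _ => im_le_im_subordStep z) (fun _ => im_le_im_subordStep z)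
    (exists_im_subordStep_lt ν z) (exists_im_subordStep_lt μ z)

lemma mapsTo_subordination : MapsTo (subordination μ ν) UHP UHP :=
  fun _ hz => (Classical.epsilon_spec (exists_isFixedPt_subordStep_comp μ ν hz)).1

lemma isFixedPt_subordination (hz : z ∈ UHP) :
    IsFixedPt (subordStep ν z ∘ subordStep μ z) (subordination μ ν z) :=
  (Classical.epsilon_spec (exists_isFixedPt_subordStep_comp μ ν hz)).2

lemma subordination_eq_of_isFixedPt (hz : z ∈ UHP) (hw : w ∈ UHP)
    (hfw : IsFixedPt (subordStep ν z ∘ subordStep μ z) w) : subordination μ ν z = w :=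
  eq_of_isFixedPt (differentiableOn_subordStep_comp hz) hz (im_le_im_subordStep_comp hz)
    (mapsTo_subordination hz) hw (isFixedPt_subordination hz) hfw

lemma subordStep_subordination (hz : z ∈ UHP) :
    subordStep μ z (subordination μ ν z) = subordination ν μ z :=
  (subordination_eq_of_isFixedPt hz (mapsTo_subordStep hz (mapsTo_subordination hz))
    (congrArg (subordStep μ z) (isFixedPt_subordination hz))).symm

lemma Fmeas_subordination (hz : z ∈ UHP) :
    Fmeas μ (subordination μ ν z) = subordination μ ν z + subordination ν μ z - z :=
  subordStep_eq_iff.1 (subordStep_subordination hz)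

theorem subordination_eq {w₁ w₂ : ℂ} (hz : z ∈ UHP) (hw₁ : w₁ ∈ UHP)
    (h : Fmeas μ w₁ = Fmeas ν w₂) (hadd : Fmeas μ w₁ = w₁ + w₂ - z) :
    subordination μ ν z = w₁ ∧ subordination ν μ z = w₂ := by
  have hstep : subordStep μ z w₁ = w₂ := subordStep_eq_iff.2 hadd
  have h₁ : subordination μ ν z = w₁ := subordination_eq_of_isFixedPt hz hw₁ <| by
    rw [isFixedPt_subordStep_comp_iff, hstep, h]
  exact ⟨h₁, by rw [← subordStep_subordination hz, h₁, hstep]⟩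

lemma isInvertible_of_apply_one_ne_zero {𝕜 : Type*} [NontriviallyNormedField 𝕜]
    {L : 𝕜 →L[𝕜] 𝕜} (hL : L 1 ≠ 0) : L.IsInvertible :=
  ⟨.unitsEquivAut 𝕜 (.mk0 _ hL), by ext; simp⟩

theorem differentiableOn_subordination : DifferentiableOn ℂ (subordination μ ν) UHP := by
  intro z hz
  let Φ (p : ℂ × ℂ) : ℂ := subordStep ν p.1 (subordStep μ p.1 p.2) - p.2
  let ω : ℂ := subordination μ ν z
  have hω : ω ∈ UHP := mapsTo_subordination hz
  have hΦ : HasStrictFDerivAt Φ (fderiv ℂ Φ (z, ω)) (z, ω) :=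
    ((analyticAt_subordStep analyticAt_fst (analyticAt_subordStep analyticAt_fst analyticAt_snd hω)
      (mapsTo_subordStep hz hω)).fun_sub analyticAt_snd).hasStrictFDerivAt
  have hinv : (fderiv ℂ Φ (z, ω) ∘L .inr ℂ ℂ ℂ).IsInvertible := by
    have hderiv : HasDerivAt (fun w => (subordStep ν z ∘ subordStep μ z) w - w)
        (deriv (subordStep ν z ∘ subordStep μ z) ω - 1) ω :=
      ((differentiableOn_subordStep_comp hz).differentiableAt
        (isOpen_UHP.mem_nhds hω)).hasDerivAt.sub (hasDerivAt_id ω)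
    have heq := (hΦ.hasFDerivAt.comp ω (hasFDerivAt_prodMk_right z ω)).hasDerivAt.unique hderiv
    refine isInvertible_of_apply_one_ne_zero ?_
    rw [heq, sub_ne_zero]
    exact deriv_ne_one_of_isFixedPt (differentiableOn_subordStep_comp hz) hz
      (im_le_im_subordStep_comp hz) hω (isFixedPt_subordination hz)
  refine (differentiableAt_of_eventually_eq_of_apply_eq hΦ hinv ?_).differentiableWithinAt
  filter_upwards [(isOpen_UHP.prod isOpen_UHP).mem_nhds ⟨hz, hω⟩] with p hp hΦp
  have hzero : Φ (z, ω) = 0 := sub_eq_zero.2 (isFixedPt_subordination hz)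
  exact (subordination_eq_of_isFixedPt hp.1 hp.2 (sub_eq_zero.1 (hΦp.trans hzero))).symm

theorem subordination_isEquivalent_I_mul :
    (fun y : ℝ => subordination μ ν (I * y)) ~[atTop] fun y => I * y := by
  have hμ : (fun y : ℝ => Fmeas μ (I * y)) ~[atTop] fun y => I * y :=
    Fmeas_comp_isEquivalent_I_mul .refl
  have hν : (fun y : ℝ => Fmeas ν (Fmeas μ (I * y))) ~[atTop] fun y => I * y :=
    Fmeas_comp_isEquivalent_I_mul hμ
  let d (y : ℝ) : ℂ := (subordStep ν (I * y) ∘ subordStep μ (I * y)) (I * y) - I * y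
  have hd : d =o[atTop] fun y => I * (y : ℂ) := by
    refine (hν.isLittleO.sub hμ.isLittleO).congr_left fun y => ?_
    simp only [d, comp_apply, subordStep, Pi.sub_apply, add_sub_cancel, add_sub_cancel_left,
      sub_sub_sub_cancel_right]
  refine IsBigO.trans_isLittleO (.of_bound 2 ?_) hd
  filter_upwards [hd.def (c := 1 / 4) (by norm_num), eventually_gt_atTop 0] with y hy hy0
  have hz := I_mul_ofReal_mem_UHP hy0
  refine norm_fixedPt_sub_le (differentiableOn_subordStep_comp hz) hz
    (im_le_im_subordStep_comp hz) (mapsTo_subordination hz) (isFixedPt_subordination hz) ?_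
  rw [norm_I_mul_ofReal hy0] at hy
  rw [I_mul_im, ofReal_re]
  linarith

end Subordination

theorem biane_subordination_additive_general
    (μ ν : Measure ℝ) [IsProbabilityMeasure μ] [IsProbabilityMeasure ν] :
    ∃ lam : Measure ℝ, IsProbabilityMeasure lam ∧
    ∃ ω₁ ω₂ : ℂ → ℂ,
      DifferentiableOn ℂ ω₁ UHP ∧ Set.MapsTo ω₁ UHP UHP ∧
      DifferentiableOn ℂ ω₂ UHP ∧ Set.MapsTo ω₂ UHP UHP ∧
      (∀ z ∈ UHP, Fmeas lam z = Fmeas μ (ω₁ z) ∧ Fmeas lam z = Fmeas ν (ω₂ z) ∧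
        Fmeas lam z + z = ω₁ z + ω₂ z) ∧
      Tendsto (fun y : ℝ => ω₁ (Complex.I * y) / (Complex.I * y)) atTop (𝓝 1) ∧
      Tendsto (fun y : ℝ => ω₂ (Complex.I * y) / (Complex.I * y)) atTop (𝓝 1) ∧
      (∀ z ∈ UHP, ∀ w₁ ∈ UHP, ∀ w₂ : ℂ, Fmeas μ w₁ = Fmeas ν w₂ → Fmeas μ w₁ = w₁ + w₂ - z →
        ω₁ z = w₁ ∧ ω₂ z = w₂) := by
  have hne : ∀ᶠ y : ℝ in atTop, I * (y : ℂ) ≠ 0 :=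
    (eventually_gt_atTop 0).mono fun y hy => ne_zero_of_mem_UHP (I_mul_ofReal_mem_UHP hy)
  obtain ⟨lam, hlam, hFlam⟩ := exists_isProbabilityMeasure_Fmeas_eq
    (differentiableOn_Fmeas.comp (differentiableOn_subordination (μ := μ) (ν := ν))
      mapsTo_subordination) (mapsTo_Fmeas (μ := μ) |>.comp mapsTo_subordination)
    (Fmeas_comp_isEquivalent_I_mul (μ := μ) (subordination_isEquivalent_I_mul (ν := ν)))
  refine ⟨lam, hlam, subordination μ ν, subordination ν μ, differentiableOn_subordination,
    mapsTo_subordination, differentiableOn_subordination, mapsTo_subordination, fun z hz => ?_,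
    (Asymptotics.isEquivalent_iff_tendsto_one hne).1 subordination_isEquivalent_I_mul,
    (Asymptotics.isEquivalent_iff_tendsto_one hne).1 subordination_isEquivalent_I_mul,
    fun z hz w₁ hw₁ w₂ => subordination_eq hz hw₁⟩
  have hμ := Fmeas_subordination (μ := μ) (ν := ν) hz
  have hν := Fmeas_subordination (μ := ν) (ν := μ) hz
  rw [hFlam hz, Function.comp_apply]
  exact ⟨rfl, by rw [hμ, hν, add_comm], by rw [hμ, sub_add_cancel]⟩

/-- Biane's subordination theorem for free additive convolution: for Borel
probability measures `μ, ν` on `ℝ` there are a probability measure `λ`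
(`= μ ⊞ ν`) and analytic self-maps `ω₁, ω₂` of `ℂ⁺` such that
`F_λ = F_μ ∘ ω₁ = F_ν ∘ ω₂`, `F_λ(z) + z = ω₁(z) + ω₂(z)` and
`ω_j(iy)/(iy) → 1`; the pair `(ω₁, ω₂)` with
`F_μ(ω₁(z)) = F_ν(ω₂(z)) = ω₁(z) + ω₂(z) − z` is unique. -/
theorem biane_subordination_additive
    (μ ν : Measure ℝ) [IsProbabilityMeasure μ] [IsProbabilityMeasure ν] :
    ∃ lam : Measure ℝ, IsProbabilityMeasure lam ∧
    ∃ ω₁ ω₂ : ℂ → ℂ,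
      DifferentiableOn ℂ ω₁ UHP ∧ Set.MapsTo ω₁ UHP UHP ∧
      DifferentiableOn ℂ ω₂ UHP ∧ Set.MapsTo ω₂ UHP UHP ∧
      (∀ z ∈ UHP, Fmeas lam z = Fmeas μ (ω₁ z) ∧ Fmeas lam z = Fmeas ν (ω₂ z) ∧
        Fmeas lam z + z = ω₁ z + ω₂ z) ∧
      Tendsto (fun y : ℝ => ω₁ (Complex.I * y) / (Complex.I * y)) atTop (𝓝 1) ∧
      Tendsto (fun y : ℝ => ω₂ (Complex.I * y) / (Complex.I * y)) atTop (𝓝 1) ∧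
      (∀ ω₁' ω₂' : ℂ → ℂ,
        DifferentiableOn ℂ ω₁' UHP → Set.MapsTo ω₁' UHP UHP →
        DifferentiableOn ℂ ω₂' UHP → Set.MapsTo ω₂' UHP UHP →
        (∀ z ∈ UHP, Fmeas μ (ω₁' z) = Fmeas ν (ω₂' z) ∧
          Fmeas μ (ω₁' z) = ω₁' z + ω₂' z - z) →
        Set.EqOn ω₁ ω₁' UHP ∧ Set.EqOn ω₂ ω₂' UHP) := by
  obtain ⟨lam, hlam, ω₁, ω₂, hd₁, hm₁, hd₂, hm₂, hF, h₁, h₂, huniq⟩ :=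
    biane_subordination_additive_general μ ν
  exact ⟨lam, hlam, ω₁, ω₂, hd₁, hm₁, hd₂, hm₂, hF, h₁, h₂, fun ω₁' ω₂' _ hm _ _ h =>
    ⟨fun z hz => (huniq z hz _ (hm hz) _ (h z hz).1 (h z hz).2).1,
      fun z hz => (huniq z hz _ (hm hz) _ (h z hz).1 (h z hz).2).2⟩⟩
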